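/- Hardy-type inequality with potential term: let c_p := (p/(p−1))^{p−1}, let V : Ω → ℝ lie in M^q_loc(p;Ω), assume Q_{p,A,c_pV} is subcritical in Ω, let φ ∈ C_c^∞(Ω) be nonnegative and not identically 0, and let G ∈ C^{1,α}(Ω) (α ∈ (0,1]) be a positive weak solution of Q_{p,A,c_pV}(u) = φ in Ω satisfying: G → 0 at infinity in Ω, ∫_Ω V G^{p−1} dx < 0, and ∫_Ω |V| G^{p−1} dx < ∞. Set W := ((p−1)/p)^p (|∇G|_A / G)^p + ((p−1)/p)^{p−1} φ G^{1−p}. Then for every ψ ∈ C_c^∞(Ω): ∫_Ω (|∇ψ|_A^p + V|ψ|^p) dx ≥ ∫_Ω W |ψ|^p dx. -/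

import Mathlib

/-!
The inequality is Picone's inequality for the supersolution `G ^ ((p-1)/p)`, written directly in
terms of `G`. Testing the equation of `G` with `η = |ψ|^p G^{1-p}` and multiplying by
`γ = ((p-1)/p)^{p-1}`, which is the inverse of `c_p`, gives

`∫ V |ψ|^p = γ ∫ φ G^{1-p} |ψ|^p - γ ∫ |∇G|_A^{p-2} ⟨A∇G, ∇η⟩`.

Expanding `∇η` and using Cauchy–Schwarz for `⟨A·,·⟩` (`abs_aInner_le`), the claim becomes the
pointwise inequality `p a b^{p-1} ≤ a^p + (p-1) b^p` with `a = |∇ψ|_A` and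
`b = ((p-1)/p) |ψ| |∇G|_A / G` (`picone_pointwise`), a case of Young's inequality.

The function `η` is only `C¹` with compact support, so the weak formulation is first extended from
`C_c^∞` to `C_c^1` by mollification (`exists_testFun_approx`, `weak_eq_extends`). This needs the flux
`|∇G|_A^{p-2} A∇G` and the function `V G^{p-1}` to be locally integrable. The flux is locally
bounded because it is dominated by `|∇G|_A^{p-1}` (`integrableOn_flux`), and `V G^{p-1}` is
integrable on `Ω` because its integral is nonzero.
-/

open MeasureTheory Set Filter Topology

noncomputable section

variable {n : ℕ}

/-- The `A`-inner product `⟨A(x)ξ, η⟩`. -/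
def aInner (A : EuclideanSpace ℝ (Fin n) → Matrix (Fin n) (Fin n) ℝ)
    (x ξ η : EuclideanSpace ℝ (Fin n)) : ℝ :=
  ∑ i, ∑ j, A x i j * ξ j * η i

/-- `|ξ|_A := ⟨A(x)ξ, ξ⟩^{1/2}`. -/
def aNorm (A : EuclideanSpace ℝ (Fin n) → Matrix (Fin n) (Fin n) ℝ)
    (x ξ : EuclideanSpace ℝ (Fin n)) : ℝ :=
  Real.sqrt (aInner A x ξ ξ)

/-- Assumptions on the matrix field `A`: symmetric, positive definite, locally Hölder
continuous, and locally uniformly elliptic on `Ω`. -/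
structure IsEllipticMatrix (Ω : Set (EuclideanSpace ℝ (Fin n)))
    (A : EuclideanSpace ℝ (Fin n) → Matrix (Fin n) (Fin n) ℝ) : Prop where
  symm : ∀ x ∈ Ω, (A x).IsSymm
  posdef : ∀ x ∈ Ω, ∀ ξ : EuclideanSpace ℝ (Fin n), ξ ≠ 0 → 0 < aInner A x ξ ξ
  locHolder : ∀ K ⊆ Ω, IsCompact K → ∃ C > (0:ℝ), ∃ α ∈ Set.Ioc (0:ℝ) 1,
      ∀ x ∈ K, ∀ y ∈ K, ∀ i j, |A x i j - A y i j| ≤ C * dist x y ^ α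
  elliptic : ∀ K ⊆ Ω, IsCompact K → ∃ Θ > (0:ℝ), ∀ x ∈ K, ∀ ξ : EuclideanSpace ℝ (Fin n),
      Θ⁻¹ * ‖ξ‖ ^ 2 ≤ aInner A x ξ ξ ∧ aInner A x ξ ξ ≤ Θ * ‖ξ‖ ^ 2

/-- Test functions: `C_c^∞` functions with support in `U`. -/
def IsTestFun (U : Set (EuclideanSpace ℝ (Fin n))) (ψ : EuclideanSpace ℝ (Fin n) → ℝ) : Prop :=
  ContDiff ℝ (⊤ : ℕ∞) ψ ∧ HasCompactSupport ψ ∧ tsupport ψ ⊆ U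

/-- Weakly `(p,A)`-harmonic in `U`. -/
def IsPAHarmonic (A : EuclideanSpace ℝ (Fin n) → Matrix (Fin n) (Fin n) ℝ) (p : ℝ)
    (U : Set (EuclideanSpace ℝ (Fin n))) (G : EuclideanSpace ℝ (Fin n) → ℝ) : Prop :=
  ∀ ψ, IsTestFun U ψ →
    ∫ x in U, (aNorm A x (gradient G x)) ^ (p - 2) *
      aInner A x (gradient G x) (gradient ψ x) = 0

/-- Weak solution of `Q_{p,A,V}(u) = g` in `U` (for positive `u`). -/
def IsWeakSolution (A : EuclideanSpace ℝ (Fin n) → Matrix (Fin n) (Fin n) ℝ) (p : ℝ)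
    (V g : EuclideanSpace ℝ (Fin n) → ℝ) (U : Set (EuclideanSpace ℝ (Fin n)))
    (u : EuclideanSpace ℝ (Fin n) → ℝ) : Prop :=
  ∀ ψ, IsTestFun U ψ →
    (∫ x in U, (aNorm A x (gradient u x)) ^ (p - 2) *
        aInner A x (gradient u x) (gradient ψ x))
      + (∫ x in U, V x * u x ^ (p - 1) * ψ x)
      = ∫ x in U, g x * ψ x

/-- Weak supersolution of `Q_{p,A,V}(u) = 0` in `U` (for positive `u`). -/
def IsWeakSupersolution (A : EuclideanSpace ℝ (Fin n) → Matrix (Fin n) (Fin n) ℝ) (p : ℝ)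
    (V : EuclideanSpace ℝ (Fin n) → ℝ) (U : Set (EuclideanSpace ℝ (Fin n)))
    (u : EuclideanSpace ℝ (Fin n) → ℝ) : Prop :=
  ∀ ψ, IsTestFun U ψ → (∀ x, 0 ≤ ψ x) →
    0 ≤ (∫ x in U, (aNorm A x (gradient u x)) ^ (p - 2) *
        aInner A x (gradient u x) (gradient ψ x))
      + (∫ x in U, V x * u x ^ (p - 1) * ψ x)

/-- `Q_{p,A,V}` is subcritical in `Ω`. -/
def IsSubcritical (A : EuclideanSpace ℝ (Fin n) → Matrix (Fin n) (Fin n) ℝ) (p : ℝ)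
    (V : EuclideanSpace ℝ (Fin n) → ℝ) (Ω : Set (EuclideanSpace ℝ (Fin n))) : Prop :=
  ∃ W₀ : EuclideanSpace ℝ (Fin n) → ℝ, ContinuousOn W₀ Ω ∧ (∀ x ∈ Ω, 0 ≤ W₀ x) ∧
    (∃ x ∈ Ω, W₀ x ≠ 0) ∧
    ∀ ψ, IsTestFun Ω ψ →
      0 ≤ ∫ x in Ω, ((aNorm A x (gradient ψ x)) ^ p + (V x - W₀ x) * |ψ x| ^ p)

/-- A null-sequence for `Q_{p,A,V}` in `U`. -/
def IsNullSequence (A : EuclideanSpace ℝ (Fin n) → Matrix (Fin n) (Fin n) ℝ) (p : ℝ)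
    (V : EuclideanSpace ℝ (Fin n) → ℝ) (U : Set (EuclideanSpace ℝ (Fin n)))
    (u : ℕ → EuclideanSpace ℝ (Fin n) → ℝ) : Prop :=
  (∀ k, IsTestFun U (u k)) ∧ (∀ k x, 0 ≤ u k x) ∧
  (∃ B : Set (EuclideanSpace ℝ (Fin n)), IsOpen B ∧ B.Nonempty ∧
      IsCompact (closure B) ∧ closure B ⊆ U ∧
      ∃ c > (0:ℝ), ∀ k, c ≤ (∫ x in B, u k x ^ p) ∧ (∫ x in B, u k x ^ p) ≤ c⁻¹) ∧
  Tendsto (fun k => ∫ x in U,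
      ((aNorm A x (gradient (u k) x)) ^ p + V x * |u k x| ^ p)) atTop (𝓝 0)

/-- `V` lies in the local Morrey space `M^q_loc(p;Ω)`. -/
def InMorreyLoc (p : ℝ) (Ω : Set (EuclideanSpace ℝ (Fin n)))
    (V : EuclideanSpace ℝ (Fin n) → ℝ) : Prop :=
  if p < n then
    ∃ q : ℝ, q > (n : ℝ) / p ∧ ∀ ω : Set (EuclideanSpace ℝ (Fin n)),
      IsOpen ω → IsCompact (closure ω) → closure ω ⊆ Ω →
      ∃ M : ℝ, ∀ y ∈ ω, ∀ r ∈ Set.Ioo (0:ℝ) (Metric.diam ω),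
        r ^ ((n : ℝ) / q - n) * (∫ x in ω ∩ Metric.ball y r, |V x|) ≤ M
  else if (n : ℝ) < p then
    MeasureTheory.LocallyIntegrableOn V Ω
  else
    ∃ q : ℝ, q > (n : ℝ) ∧ ∀ ω : Set (EuclideanSpace ℝ (Fin n)),
      IsOpen ω → IsCompact (closure ω) → closure ω ⊆ Ω →
      ∃ M : ℝ, ∀ y ∈ ω, ∀ r ∈ Set.Ioo (0:ℝ) (Metric.diam ω),
        (Real.log (Metric.diam ω / r)) ^ (q * ((n : ℝ) - 1) / n) *
          (∫ x in ω ∩ Metric.ball y r, |V x|) ≤ M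

/-- `G ∈ C^{1,α}(U)`: continuously differentiable with locally `α`-Hölder gradient. -/
def IsC1Holder (α : ℝ) (U : Set (EuclideanSpace ℝ (Fin n)))
    (G : EuclideanSpace ℝ (Fin n) → ℝ) : Prop :=
  ContDiffOn ℝ 1 G U ∧ ∀ K ⊆ U, IsCompact K → ∃ C : ℝ,
    ∀ x ∈ K, ∀ y ∈ K, ‖gradient G x - gradient G y‖ ≤ C * dist x y ^ α

/-- `G → 0` at infinity in `Ω` (where `G` is considered on `U ⊆ Ω`). -/
def TendstoZeroAtInfinityIn (Ω U : Set (EuclideanSpace ℝ (Fin n)))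
    (G : EuclideanSpace ℝ (Fin n) → ℝ) : Prop :=
  ∀ ε > (0:ℝ), ∃ K ⊆ Ω, IsCompact K ∧ ∀ x ∈ U \ K, G x < ε

open scoped Classical in
/-- Flux integral `∫_S |∇G|_A^p / |∇G| dH^{n-1}`, with integrand `0` where `∇G = 0`. -/
def fluxIntegral (A : EuclideanSpace ℝ (Fin n) → Matrix (Fin n) (Fin n) ℝ) (p : ℝ)
    (G : EuclideanSpace ℝ (Fin n) → ℝ) (S : Set (EuclideanSpace ℝ (Fin n))) : ℝ :=
  ∫ x in S, (if gradient G x = 0 then 0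
    else (aNorm A x (gradient G x)) ^ p / ‖gradient G x‖) ∂(μH[(n : ℝ) - 1])

end

/-! ### Pointwise Picone inequality -/

/-- The elementary inequality `p a b^{p-1} ≤ a^p + (p-1) b^p` behind Picone's identity. -/
lemma picone_young {p a b : ℝ} (hp : 1 < p) (ha : 0 ≤ a) (hb : 0 ≤ b) :
    p * a * b ^ (p - 1) ≤ a ^ p + (p - 1) * b ^ p := by
  have hp0 : 0 < p := by linarith
  have h1 : p - 1 ≠ 0 := by linarith
  have h := Real.young_inequality_of_nonneg ha (Real.rpow_nonneg hb (p - 1))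
    (Real.HolderConjugate.conjExponent hp)
  rw [← Real.rpow_mul hb] at h
  have h2 : (p - 1) * Real.conjExponent p = p := by
    rw [Real.conjExponent]; field_simp
  rw [h2, Real.conjExponent] at h
  have h3 := mul_le_mul_of_nonneg_left h hp0.le
  have h4 : p * (a ^ p / p + b ^ p / (p / (p - 1))) = a ^ p + (p - 1) * b ^ p := by
    field_simp
  linarith

/-- Scalar form of the pointwise Picone inequality. Here `N = |∇G|_A`, `m = |∇ψ|_A`, `s = ψ`,
`g = G` and `I = ⟨A∇G, ∇ψ⟩`; the bracket is `⟨A∇G, ∇(|ψ|^p G^{1-p})⟩`. -/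
lemma picone_pointwise {p N m s g I : ℝ} (hp : 1 < p) (hN : 0 ≤ N) (hm : 0 ≤ m) (hg : 0 < g)
    (hI : |I| ≤ N * m) :
    ((p - 1) / p) ^ p * (N / g) ^ p * |s| ^ p ≤
      m ^ p - ((p - 1) / p) ^ (p - 1) * (N ^ (p - 2) *
        (p * |s| ^ (p - 2) * s * g ^ (1 - p) * I - (p - 1) * |s| ^ p * g ^ (-p) * N ^ 2)) := by
  have hp0 : 0 < p := by linarith
  have hp1 : 0 < p - 1 := by linarith
  set γ := (p - 1) / p with hγ
  have hγ0 : 0 < γ := by positivity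
  have hs := abs_nonneg s
  have split : ∀ {t : ℝ}, 0 ≤ t → t ^ p = t ^ (p - 1) * t := by
    intro t ht
    rw [← Real.rpow_add_one' ht (by linarith)]; ring_nf
  -- the base point `b` of Young's inequality is `γ |ψ| |∇G|_A / G`
  have hb : 0 ≤ γ * (N / g) * |s| := by positivity
  have hY := picone_young hp hm hb
  have e1 : (γ * (N / g) * |s|) ^ p = γ ^ p * (N / g) ^ p * |s| ^ p := by
    rw [Real.mul_rpow (by positivity) hs, Real.mul_rpow hγ0.le (by positivity)]
  have e2 : (γ * (N / g) * |s|) ^ (p - 1) =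
      γ ^ (p - 1) * (N ^ (p - 1) * g ^ (1 - p)) * |s| ^ (p - 1) := by
    rw [Real.mul_rpow (by positivity) hs, Real.mul_rpow hγ0.le (by positivity),
      Real.div_rpow hN hg.le, show (1 - p) = -(p - 1) by ring, Real.rpow_neg hg.le,
      div_eq_mul_inv]
  have e3 : N ^ (p - 2) * N ^ 2 = N ^ p := by
    rcases hN.eq_or_lt with h | h
    · rw [← h, Real.zero_rpow hp0.ne']; simp
    · rw [← Real.rpow_natCast N 2, ← Real.rpow_add h]; norm_num
  have e4 : N ^ (p - 2) * |I| ≤ N ^ (p - 1) * m := by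
    rcases hN.eq_or_lt with h | h
    · rw [← h] at hI ⊢
      have : |I| = 0 := le_antisymm (by simpa using hI) (abs_nonneg _)
      rw [this, mul_zero]; positivity
    · calc N ^ (p - 2) * |I| ≤ N ^ (p - 2) * (N * m) := by gcongr
        _ = N ^ (p - 1) * m := by
          rw [← mul_assoc, ← Real.rpow_add_one h.ne']; ring_nf
  have e5 : |(|s| ^ (p - 2) * s)| = |s| ^ (p - 1) := by
    rcases hs.eq_or_lt with h | h
    · have : s = 0 := abs_eq_zero.1 h.symm
      rw [this]; simp [Real.zero_rpow hp1.ne']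
    · rw [abs_mul, abs_of_nonneg (by positivity : 0 ≤ |s| ^ (p - 2)),
        ← Real.rpow_add_one h.ne']; ring_nf
  have e6 : (N / g) ^ p = N ^ p * g ^ (-p) := by
    rw [Real.div_rpow hN hg.le, Real.rpow_neg hg.le, div_eq_mul_inv]
  have e7 : N ^ (p - 2) * (|s| ^ (p - 2) * s * I) ≤ |s| ^ (p - 1) * (N ^ (p - 1) * m) := by
    calc N ^ (p - 2) * (|s| ^ (p - 2) * s * I)
        ≤ N ^ (p - 2) * |(|s| ^ (p - 2) * s) * I| := by
          gcongr; exact le_abs_self _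
      _ = |s| ^ (p - 1) * (N ^ (p - 2) * |I|) := by rw [abs_mul, e5]; ring
      _ ≤ _ := by gcongr
  have e8 : γ ^ p = γ ^ (p - 1) * γ := split hγ0.le
  have e9 : γ * p = p - 1 := by rw [hγ]; field_simp
  rw [e1, e2] at hY
  have e10 : γ ^ (p - 1) * (p * g ^ (1 - p)) * (N ^ (p - 2) * (|s| ^ (p - 2) * s * I)) ≤
      γ ^ (p - 1) * (p * g ^ (1 - p)) * (|s| ^ (p - 1) * (N ^ (p - 1) * m)) := by
    gcongr
  have e11 : γ ^ (p - 1) * (N ^ (p - 2) *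
        (p * |s| ^ (p - 2) * s * g ^ (1 - p) * I - (p - 1) * |s| ^ p * g ^ (-p) * N ^ 2)) =
      γ ^ (p - 1) * (p * g ^ (1 - p)) * (N ^ (p - 2) * (|s| ^ (p - 2) * s * I)) -
      p * (γ ^ p * (N / g) ^ p * |s| ^ p) := by
    rw [e6, e8, ← e3, ← e9]; ring
  rw [e11]
  linarith

/-! ### Weak equations tested with compactly supported `C¹` functions -/

/-- A `C¹` function compactly supported in an open set is approximated in `C¹` by test functions
whose supports stay in one compact subset (mollification). -/
lemma exists_testFun_approx {n : ℕ} {Ω : Set (EuclideanSpace ℝ (Fin n))} (hΩ : IsOpen Ω)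
    {η : EuclideanSpace ℝ (Fin n) → ℝ} (hη : ContDiff ℝ 1 η) (hc : HasCompactSupport η)
    (hsub : tsupport η ⊆ Ω) :
    ∃ K ⊆ Ω, IsCompact K ∧ tsupport η ⊆ K ∧ ∀ ε > (0:ℝ), ∃ ζ, IsTestFun Ω ζ ∧ tsupport ζ ⊆ K ∧
      ∀ x, |ζ x - η x| ≤ ε ∧ ‖gradient ζ x - gradient η x‖ ≤ ε := by
  obtain ⟨δ, hδ, hδΩ⟩ := hc.isCompact.exists_cthickening_subset_open hΩ hsub
  have hK : IsCompact (Metric.cthickening δ (tsupport η)) := hc.isCompact.cthickening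
  refine ⟨Metric.cthickening δ (tsupport η), hδΩ, hK, Metric.self_subset_cthickening _, ?_⟩
  intro ε hε
  have hη' : Continuous (fderiv ℝ η) := hη.continuous_fderiv one_ne_zero
  obtain ⟨δ₁, hδ₁, h₁⟩ := Metric.uniformContinuous_iff.1
    (hc.uniformContinuous_of_continuous hη.continuous) ε hε
  obtain ⟨δ₂, hδ₂, h₂⟩ := Metric.uniformContinuous_iff.1
    ((hc.fderiv ℝ).uniformContinuous_of_continuous hη') ε hε
  set r := min δ (min δ₁ δ₂) with hr
  have hr0 : 0 < r := by positivity
  let ρ : ContDiffBump (0 : EuclideanSpace ℝ (Fin n)) := ⟨r / 2, r, by positivity, by linarith⟩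
  have hρr : ρ.rOut = r := rfl
  let L := ContinuousLinearMap.lsmul ℝ ℝ (E := ℝ)
  let ζ := convolution (ρ.normed volume) η L volume
  have hρli : LocallyIntegrable (ρ.normed volume) volume :=
    ρ.continuous_normed.locallyIntegrable
  have hsupp : tsupport ζ ⊆ Metric.cthickening δ (tsupport η) := by
    refine closure_minimal ?_ Metric.isClosed_cthickening
    intro x hx
    obtain ⟨y, hy, z, hz, rfl⟩ := support_convolution_subset_swap L hx
    rw [ρ.support_normed_eq, mem_ball_zero_iff, hρr] at hz
    refine Metric.mem_cthickening_of_dist_le _ y _ _ (subset_tsupport _ hy) ?_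
    simpa using hz.le.trans (min_le_left _ _)
  refine ⟨ζ, ⟨?_, hK.of_isClosed_subset (isClosed_tsupport _) hsupp, hsupp.trans hδΩ⟩, hsupp, ?_⟩
  · exact ρ.hasCompactSupport_normed.contDiff_convolution_left L ρ.contDiff_normed
      hη.continuous.locallyIntegrable
  intro x
  constructor
  · have := ρ.dist_normed_convolution_le (μ := volume) (g := η) (x₀ := x) (ε := ε)
      hη.continuous.aestronglyMeasurable (fun y hy => (h₁ (lt_of_lt_of_le
        (Metric.mem_ball.1 hy) ((min_le_right _ _).trans (min_le_left _ _)))).le)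
    rwa [Real.dist_eq] at this
  · have := ρ.dist_normed_convolution_le (μ := volume) (g := fderiv ℝ η) (x₀ := x) (ε := ε)
      hη'.aestronglyMeasurable (fun y hy => (h₂ (lt_of_lt_of_le
        (Metric.mem_ball.1 hy) ((min_le_right _ _).trans (min_le_right _ _)))).le)
    have hd := (hc.hasFDerivAt_convolution_right L hρli hη x).fderiv
    have he : (convolution (ρ.normed volume) (fderiv ℝ η)
        (L.precompR (EuclideanSpace ℝ (Fin n))) volume) x =
        (convolution (ρ.normed volume) (fderiv ℝ η) (ContinuousLinearMap.lsmul ℝ ℝ) volume) x := by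
      rw [convolution_def, convolution_def]
      congr 1
    rw [he] at hd
    rw [gradient, gradient, ← map_sub, LinearIsometryEquiv.norm_map]
    rw [dist_eq_norm] at this
    change ‖fderiv ℝ ζ x - fderiv ℝ η x‖ ≤ ε
    rw [hd]; exact this

/-- A locally integrable field paired with a continuous field supported in a compact subset
of `Ω` is integrable on `Ω`. -/
lemma integrableOn_inner_of_compact {n : ℕ} {F : Type*} [NormedAddCommGroup F]
    [InnerProductSpace ℝ F] {Ω K : Set (EuclideanSpace ℝ (Fin n))} (hΩ : IsOpen Ω)
    (hK : IsCompact K) {H Y : EuclideanSpace ℝ (Fin n) → F} (hH : IntegrableOn H K)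
    (hY : ContinuousOn Y K) (hYm : AEStronglyMeasurable Y (volume.restrict K))
    (hY0 : ∀ x ∉ K, Y x = 0) : IntegrableOn (fun x => inner ℝ (H x) (Y x)) Ω := by
  refine IntegrableOn.of_forall_sdiff_eq_zero (s := K) ?_ hΩ.measurableSet ?_
  · obtain ⟨C, hC⟩ := hK.exists_bound_of_continuousOn hY
    refine Integrable.mono' (hH.norm.mul_const C) (hH.aestronglyMeasurable.inner hYm) ?_
    filter_upwards [ae_restrict_mem hK.measurableSet] with x hx
    exact (norm_inner_le_norm _ _).trans (by gcongr; exact hC x hx)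
  · intro x hx
    simp [hY0 x hx.2]

lemma integrableOn_mul_of_compact {n : ℕ} {Ω K : Set (EuclideanSpace ℝ (Fin n))}
    (hΩ : IsOpen Ω) (hK : IsCompact K) {b f : EuclideanSpace ℝ (Fin n) → ℝ}
    (hb : IntegrableOn b K) (hf : ContinuousOn f K) (hf0 : ∀ x ∉ K, f x = 0) :
    IntegrableOn (fun x => b x * f x) Ω := by
  have h := integrableOn_inner_of_compact hΩ hK hb hf
    (hf.aestronglyMeasurable hK.measurableSet) hf0
  simpa [mul_comm] using h

lemma gradient_eq_zero_of_notMem {n : ℕ} {f : EuclideanSpace ℝ (Fin n) → ℝ}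
    {x : EuclideanSpace ℝ (Fin n)} (hx : x ∉ tsupport f) : gradient f x = 0 := by
  rw [gradient, fderiv_of_notMem_tsupport ℝ hx, map_zero]

lemma continuous_gradient {n : ℕ} {f : EuclideanSpace ℝ (Fin n) → ℝ} (hf : ContDiff ℝ 1 f) :
    Continuous (gradient f) :=
  (LinearIsometryEquiv.continuous _).comp (hf.continuous_fderiv one_ne_zero)

/-- A weak equation `-div H + b = 0`, tested with `C_c^∞`, extends to `C_c^1` test functions. -/
lemma weak_eq_extends {n : ℕ} {Ω : Set (EuclideanSpace ℝ (Fin n))} (hΩ : IsOpen Ω)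
    {H : EuclideanSpace ℝ (Fin n) → EuclideanSpace ℝ (Fin n)}
    {b : EuclideanSpace ℝ (Fin n) → ℝ}
    (hH : ∀ K ⊆ Ω, IsCompact K → IntegrableOn H K)
    (hb : ∀ K ⊆ Ω, IsCompact K → IntegrableOn b K)
    (hweak : ∀ ψ, IsTestFun Ω ψ → ∫ x in Ω, (inner ℝ (H x) (gradient ψ x) + b x * ψ x) = 0)
    {η : EuclideanSpace ℝ (Fin n) → ℝ} (hη : ContDiff ℝ 1 η) (hc : HasCompactSupport η)
    (hsub : tsupport η ⊆ Ω) :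
    IntegrableOn (fun x => inner ℝ (H x) (gradient η x) + b x * η x) Ω ∧
    ∫ x in Ω, (inner ℝ (H x) (gradient η x) + b x * η x) = 0 := by
  obtain ⟨K, hKΩ, hK, hηK, happ⟩ := exists_testFun_approx hΩ hη hc hsub
  have hgrad0 : ∀ {f : EuclideanSpace ℝ (Fin n) → ℝ}, tsupport f ⊆ K → ∀ x ∉ K,
      gradient f x = 0 := fun hf x hx => gradient_eq_zero_of_notMem fun h => hx (hf h)
  have hint : ∀ {f : EuclideanSpace ℝ (Fin n) → ℝ}, ContDiff ℝ 1 f → tsupport f ⊆ K →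
      IntegrableOn (fun x => inner ℝ (H x) (gradient f x) + b x * f x) Ω := by
    intro f hf hfK
    exact (integrableOn_inner_of_compact hΩ hK (hH K hKΩ hK)
      (continuous_gradient hf).continuousOn (continuous_gradient hf).aestronglyMeasurable
      (hgrad0 hfK)).add (integrableOn_mul_of_compact hΩ hK (hb K hKΩ hK)
      hf.continuous.continuousOn
      fun x hx => image_eq_zero_of_notMem_tsupport fun h => hx (hfK h))
  refine ⟨hint hη hηK, ?_⟩
  set M := ∫ x in K, (‖H x‖ + ‖b x‖) with hM
  have hM0 : 0 ≤ M := integral_nonneg fun x => by positivity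
  -- the functional at `η` differs from its value `0` at a test function by at most `ε M`
  have key : ∀ ε > (0:ℝ), |∫ x in Ω, (inner ℝ (H x) (gradient η x) + b x * η x)| ≤ ε * M := by
    intro ε hε
    obtain ⟨ζ, hζ, hζK, hζη⟩ := happ ε hε
    have hζ1 : ContDiff ℝ 1 ζ := hζ.1.of_le (by exact_mod_cast le_top)
    rw [← sub_zero (∫ x in Ω, _), ← hweak ζ hζ, ← integral_sub (hint hη hηK) (hint hζ1 hζK),
      ← Real.norm_eq_abs]
    rw [setIntegral_eq_of_subset_of_forall_sdiff_eq_zero hΩ.measurableSet hKΩ (fun x hx => by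
      simp [hgrad0 hηK x hx.2, hgrad0 hζK x hx.2,
        image_eq_zero_of_notMem_tsupport (fun h => hx.2 (hηK h)),
        image_eq_zero_of_notMem_tsupport (fun h => hx.2 (hζK h))]), hM,
      ← integral_const_mul]
    refine norm_integral_le_of_norm_le
      (((hH K hKΩ hK).norm.add (hb K hKΩ hK).norm).const_mul ε) (.of_forall fun x => ?_)
    have e : inner ℝ (H x) (gradient η x) + b x * η x -
        (inner ℝ (H x) (gradient ζ x) + b x * ζ x) =
        -(inner ℝ (H x) (gradient ζ x - gradient η x) + b x * (ζ x - η x)) := by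
      rw [inner_sub_right]; ring
    rw [e, norm_neg]
    refine (norm_add_le _ _).trans ?_
    rw [norm_mul, mul_add]
    obtain ⟨h1, h2⟩ := hζη x
    refine add_le_add ((norm_inner_le_norm _ _).trans ?_) ?_
    · rw [mul_comm]; gcongr
    · rw [mul_comm]; gcongr; exact h1
  by_contra hne
  have hpos := abs_pos.2 hne
  have h1 := key (|∫ x in Ω, (inner ℝ (H x) (gradient η x) + b x * η x)| / (2 * (M + 1)))
    (by positivity)
  rw [div_mul_eq_mul_div, le_div_iff₀ (by positivity)] at h1
  nlinarith

/-! ### The `A`-inner product and the flux -/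

/-- The vector `A(x)ξ`. -/
def aVec {n : ℕ} (A : EuclideanSpace ℝ (Fin n) → Matrix (Fin n) (Fin n) ℝ)
    (x ξ : EuclideanSpace ℝ (Fin n)) : EuclideanSpace ℝ (Fin n) :=
  WithLp.toLp 2 fun i => ∑ j, A x i j * ξ j

lemma aInner_eq_inner {n : ℕ} (A : EuclideanSpace ℝ (Fin n) → Matrix (Fin n) (Fin n) ℝ)
    (x ξ η : EuclideanSpace ℝ (Fin n)) : aInner A x ξ η = inner ℝ (aVec A x ξ) η := by
  simp only [aInner, aVec, PiLp.inner_apply, RCLike.inner_apply, conj_trivial, Finset.mul_sum]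
  exact Finset.sum_congr rfl fun i _ => Finset.sum_congr rfl fun j _ => by ring

lemma aInner_comm {n : ℕ} {Ω : Set (EuclideanSpace ℝ (Fin n))}
    {A : EuclideanSpace ℝ (Fin n) → Matrix (Fin n) (Fin n) ℝ} (hA : IsEllipticMatrix Ω A)
    {x : EuclideanSpace ℝ (Fin n)} (hx : x ∈ Ω) (ξ η : EuclideanSpace ℝ (Fin n)) :
    aInner A x ξ η = aInner A x η ξ := by
  unfold aInner
  rw [Finset.sum_comm]
  refine Finset.sum_congr rfl fun i _ => Finset.sum_congr rfl fun j _ => ?_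
  rw [(hA.symm x hx).apply i j]; ring

lemma aInner_self_nonneg {n : ℕ} {Ω : Set (EuclideanSpace ℝ (Fin n))}
    {A : EuclideanSpace ℝ (Fin n) → Matrix (Fin n) (Fin n) ℝ} (hA : IsEllipticMatrix Ω A)
    {x : EuclideanSpace ℝ (Fin n)} (hx : x ∈ Ω) (ξ : EuclideanSpace ℝ (Fin n)) :
    0 ≤ aInner A x ξ ξ := by
  by_cases h : ξ = 0
  · simp [aInner, h]
  · exact (hA.posdef x hx ξ h).le

lemma aNorm_sq {n : ℕ} {Ω : Set (EuclideanSpace ℝ (Fin n))}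
    {A : EuclideanSpace ℝ (Fin n) → Matrix (Fin n) (Fin n) ℝ} (hA : IsEllipticMatrix Ω A)
    {x : EuclideanSpace ℝ (Fin n)} (hx : x ∈ Ω) (ξ : EuclideanSpace ℝ (Fin n)) :
    aNorm A x ξ ^ 2 = aInner A x ξ ξ :=
  Real.sq_sqrt (aInner_self_nonneg hA hx ξ)

/-- Cauchy–Schwarz for the `A`-inner product. -/
lemma abs_aInner_le {n : ℕ} {Ω : Set (EuclideanSpace ℝ (Fin n))}
    {A : EuclideanSpace ℝ (Fin n) → Matrix (Fin n) (Fin n) ℝ} (hA : IsEllipticMatrix Ω A)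
    {x : EuclideanSpace ℝ (Fin n)} (hx : x ∈ Ω) (ξ η : EuclideanSpace ℝ (Fin n)) :
    |aInner A x ξ η| ≤ aNorm A x ξ * aNorm A x η := by
  have h : ∀ t : ℝ, 0 ≤ aInner A x η η * (t * t) + 2 * aInner A x ξ η * t + aInner A x ξ ξ := by
    intro t
    have h0 := aInner_self_nonneg hA hx (ξ + t • η)
    have e : ∀ ζ, aInner A x (ξ + t • η) ζ = aInner A x ξ ζ + t * aInner A x η ζ := by
      intro ζ
      rw [aInner_comm hA hx, aInner_eq_inner, inner_add_right, inner_smul_right,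
        ← aInner_eq_inner, ← aInner_eq_inner, aInner_comm hA hx ζ ξ, aInner_comm hA hx ζ η]
    have e' : ∀ ζ, aInner A x ζ (ξ + t • η) = aInner A x ξ ζ + t * aInner A x η ζ := by
      intro ζ; rw [aInner_comm hA hx, e]
    rw [e, e', e', aInner_comm hA hx η ξ] at h0
    linarith
  have hd := discrim_le_zero h
  rw [discrim] at hd
  rw [aNorm, aNorm, ← Real.sqrt_mul (aInner_self_nonneg hA hx ξ)]
  exact Real.abs_le_sqrt (by nlinarith)

lemma norm_aVec_le {n : ℕ} {Ω : Set (EuclideanSpace ℝ (Fin n))}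
    {A : EuclideanSpace ℝ (Fin n) → Matrix (Fin n) (Fin n) ℝ} (hA : IsEllipticMatrix Ω A)
    {x : EuclideanSpace ℝ (Fin n)} (hx : x ∈ Ω) {Θ : ℝ}
    (hΘ : ∀ ξ : EuclideanSpace ℝ (Fin n), aInner A x ξ ξ ≤ Θ * ‖ξ‖ ^ 2)
    (ξ : EuclideanSpace ℝ (Fin n)) : ‖aVec A x ξ‖ ≤ aNorm A x ξ * √Θ := by
  set v := aVec A x ξ with hv
  rcases eq_or_ne v 0 with h | h
  · rw [h, norm_zero]; exact mul_nonneg (Real.sqrt_nonneg _) (Real.sqrt_nonneg _)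
  have hpos : 0 < ‖v‖ := norm_pos_iff.2 h
  have h1 : ‖v‖ * ‖v‖ ≤ aNorm A x ξ * aNorm A x v := by
    rw [← real_inner_self_eq_norm_mul_norm]
    conv_lhs => rw [hv]
    rw [← aInner_eq_inner, ← hv]
    exact (le_abs_self _).trans (abs_aInner_le hA hx ξ v)
  have h2 : aNorm A x v ≤ √Θ * ‖v‖ := by
    calc aNorm A x v ≤ √(Θ * ‖v‖ ^ 2) := Real.sqrt_le_sqrt (hΘ v)
      _ = √Θ * ‖v‖ := by rw [Real.sqrt_mul' _ (by positivity), Real.sqrt_sq hpos.le]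
  have h3 : ‖v‖ * ‖v‖ ≤ aNorm A x ξ * √Θ * ‖v‖ := by
    refine h1.trans ?_
    rw [mul_assoc]
    exact mul_le_mul_of_nonneg_left h2 (Real.sqrt_nonneg _)
  exact le_of_mul_le_mul_right h3 hpos

lemma continuousOn_matrix {n : ℕ} {Ω : Set (EuclideanSpace ℝ (Fin n))} (hΩ : IsOpen Ω)
    {A : EuclideanSpace ℝ (Fin n) → Matrix (Fin n) (Fin n) ℝ} (hA : IsEllipticMatrix Ω A)
    (i j : Fin n) : ContinuousOn (fun x => A x i j) Ω := by
  intro x hx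
  obtain ⟨r, hr, hrΩ⟩ := Metric.nhds_basis_closedBall.mem_iff.1 (hΩ.mem_nhds hx)
  obtain ⟨C, hC, β, hβ, h⟩ := hA.locHolder _ hrΩ (isCompact_closedBall x r)
  refine ContinuousAt.continuousWithinAt ?_
  rw [ContinuousAt, tendsto_iff_dist_tendsto_zero]
  have hlim : Tendsto (fun y => C * dist y x ^ β) (𝓝 x) (𝓝 0) := by
    have : Tendsto (fun y => C * dist y x ^ β) (𝓝 x) (𝓝 (C * dist x x ^ β)) :=
      (((continuous_id.dist continuous_const).rpow_const
        fun _ => Or.inr hβ.1.le).const_mul C).tendsto x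
    simpa [Real.zero_rpow hβ.1.ne'] using this
  refine squeeze_zero' (.of_forall fun _ => dist_nonneg) ?_ hlim
  filter_upwards [Metric.closedBall_mem_nhds x hr] with y hy
  exact h y hy x (Metric.mem_closedBall_self hr.le) i j

lemma continuousOn_aVec {n : ℕ} {Ω : Set (EuclideanSpace ℝ (Fin n))} (hΩ : IsOpen Ω)
    {A : EuclideanSpace ℝ (Fin n) → Matrix (Fin n) (Fin n) ℝ} (hA : IsEllipticMatrix Ω A)
    {ξ : EuclideanSpace ℝ (Fin n) → EuclideanSpace ℝ (Fin n)} (hξ : ContinuousOn ξ Ω) :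
    ContinuousOn (fun x => aVec A x (ξ x)) Ω := by
  refine (PiLp.continuous_toLp 2 _).comp_continuousOn (continuousOn_pi.2 fun i => ?_)
  refine continuousOn_finsetSum _ fun j _ => (continuousOn_matrix hΩ hA i j).mul ?_
  exact (EuclideanSpace.proj (𝕜 := ℝ) j).continuous.comp_continuousOn hξ

lemma continuousOn_aNorm {n : ℕ} {Ω : Set (EuclideanSpace ℝ (Fin n))} (hΩ : IsOpen Ω)
    {A : EuclideanSpace ℝ (Fin n) → Matrix (Fin n) (Fin n) ℝ} (hA : IsEllipticMatrix Ω A)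
    {ξ : EuclideanSpace ℝ (Fin n) → EuclideanSpace ℝ (Fin n)} (hξ : ContinuousOn ξ Ω) :
    ContinuousOn (fun x => aNorm A x (ξ x)) Ω := by
  simp only [aNorm, aInner_eq_inner]
  exact ((continuousOn_aVec hΩ hA hξ).inner hξ).sqrt

/-- The flux `|ξ|_A^{p-2} A ξ` of a continuous field is locally integrable. For `p < 2` the factor
`|ξ|_A^{p-2}` is singular, but the product is bounded by a multiple of `|ξ|_A^{p-1}`. -/
lemma integrableOn_flux {n : ℕ} {Ω : Set (EuclideanSpace ℝ (Fin n))} (hΩ : IsOpen Ω)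
    {A : EuclideanSpace ℝ (Fin n) → Matrix (Fin n) (Fin n) ℝ} (hA : IsEllipticMatrix Ω A)
    {ξ : EuclideanSpace ℝ (Fin n) → EuclideanSpace ℝ (Fin n)} (hξ : ContinuousOn ξ Ω)
    {p : ℝ} (hp : 1 < p) {K : Set (EuclideanSpace ℝ (Fin n))} (hKΩ : K ⊆ Ω)
    (hK : IsCompact K) :
    IntegrableOn (fun x => aNorm A x (ξ x) ^ (p - 2) • aVec A x (ξ x)) K := by
  have hN := (continuousOn_aNorm hΩ hA hξ).mono hKΩ
  obtain ⟨Θ, hΘ, hell⟩ := hA.elliptic K hKΩ hK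
  have hbd : IntegrableOn (fun x => aNorm A x (ξ x) ^ (p - 1) * √Θ) K :=
    ((hN.rpow_const fun x _ => Or.inr (by linarith)).mul
      continuousOn_const).integrableOn_compact hK
  refine Integrable.mono' hbd ?_ ?_
  · exact ((hN.aemeasurable hK.measurableSet).pow_const _).aestronglyMeasurable.smul
      (((continuousOn_aVec hΩ hA hξ).mono hKΩ).aestronglyMeasurable hK.measurableSet)
  · filter_upwards [ae_restrict_mem hK.measurableSet] with x hx
    have h := norm_aVec_le hA (hKΩ hx) (fun ζ => (hell x hx ζ).2) (ξ x)
    have hN0 : 0 ≤ aNorm A x (ξ x) := Real.sqrt_nonneg _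
    rw [norm_smul, Real.norm_eq_abs, abs_of_nonneg (Real.rpow_nonneg hN0 _)]
    rcases hN0.eq_or_lt with h0 | h0
    · rw [← h0, zero_mul] at h
      rw [le_antisymm h (norm_nonneg _), mul_zero]
      positivity
    · calc _ ≤ aNorm A x (ξ x) ^ (p - 2) * (aNorm A x (ξ x) * √Θ) := by gcongr
        _ = aNorm A x (ξ x) ^ (p - 1) * √Θ := by
          rw [← mul_assoc, ← Real.rpow_add_one h0.ne']; ring_nf

/-! ### The test function `|ψ|^p G^{1-p}` -/

/-- The Picone test function `|ψ|^p G^{1-p}` is `C¹`, whatever `G` does outside `Ω`. -/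
lemma contDiff_picone {n : ℕ} {Ω : Set (EuclideanSpace ℝ (Fin n))} (hΩ : IsOpen Ω)
    {p : ℝ} (hp : 1 < p) {G ψ : EuclideanSpace ℝ (Fin n) → ℝ} (hG : ContDiffOn ℝ 1 G Ω)
    (hGpos : ∀ x ∈ Ω, 0 < G x) (hψ : IsTestFun Ω ψ) :
    ContDiff ℝ 1 (fun x => |ψ x| ^ p * G x ^ (1 - p)) := by
  have hψ1 : ContDiff ℝ 1 ψ := hψ.1.of_le (by exact_mod_cast le_top)
  rw [contDiff_iff_contDiffAt]
  intro x
  by_cases hx : x ∈ tsupport ψ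
  · have hxΩ := hψ.2.2 hx
    exact (hψ1.norm_rpow hp).contDiffAt.mul
      ((hG.contDiffAt (hΩ.mem_nhds hxΩ)).rpow_const_of_ne (hGpos x hxΩ).ne')
  · refine (contDiffAt_const (c := (0:ℝ))).congr_of_eventuallyEq ?_
    filter_upwards [(isClosed_tsupport ψ).isOpen_compl.mem_nhds hx] with y hy
    rw [image_eq_zero_of_notMem_tsupport hy, abs_zero, Real.zero_rpow (by linarith), zero_mul]

lemma fderiv_picone {n : ℕ} {p : ℝ} (hp : 1 < p) {G ψ : EuclideanSpace ℝ (Fin n) → ℝ}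
    {x : EuclideanSpace ℝ (Fin n)} (hG : DifferentiableAt ℝ G x) (hψ : DifferentiableAt ℝ ψ x)
    (hGpos : 0 < G x) (v : EuclideanSpace ℝ (Fin n)) :
    fderiv ℝ (fun x => |ψ x| ^ p * G x ^ (1 - p)) x v =
      p * |ψ x| ^ (p - 2) * ψ x * G x ^ (1 - p) * fderiv ℝ ψ x v -
        (p - 1) * |ψ x| ^ p * G x ^ (-p) * fderiv ℝ G x v := by
  have h1 : HasFDerivAt (fun x => |ψ x| ^ p) ((p * |ψ x| ^ (p - 2) * ψ x) • fderiv ℝ ψ x) x :=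
    (hasDerivAt_abs_rpow (ψ x) hp).comp_hasFDerivAt x hψ.hasFDerivAt
  have h2 := hG.hasFDerivAt.rpow_const (p := 1 - p) (Or.inl hGpos.ne')
  rw [HasFDerivAt.fderiv (f := fun x => |ψ x| ^ p * G x ^ (1 - p)) (h1.mul h2)]
  simp only [add_apply, smul_apply, smul_eq_mul]
  rw [show (1 - p - 1) = -p by ring]
  ring


theorem hardy_inequality_with_potential
    {n : ℕ} (hn : 2 ≤ n) (Ω : Set (EuclideanSpace ℝ (Fin n)))
    (hΩopen : IsOpen Ω) (hΩconn : IsConnected Ω)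
    (p : ℝ) (hp : 1 < p)
    (A : EuclideanSpace ℝ (Fin n) → Matrix (Fin n) (Fin n) ℝ)
    (hA : IsEllipticMatrix Ω A)
    (V : EuclideanSpace ℝ (Fin n) → ℝ) (hV : InMorreyLoc p Ω V)
    (hsub : IsSubcritical A p (fun x => (p / (p - 1)) ^ (p - 1) * V x) Ω)
    (φ : EuclideanSpace ℝ (Fin n) → ℝ) (hφ : IsTestFun Ω φ) (hφnonneg : ∀ x, 0 ≤ φ x)
    (hφne : ∃ x, φ x ≠ 0)
    (G : EuclideanSpace ℝ (Fin n) → ℝ) (α : ℝ) (hα : α ∈ Set.Ioc (0:ℝ) 1)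
    (hG1 : IsC1Holder α Ω G) (hGpos : ∀ x ∈ Ω, 0 < G x)
    (hGsol : IsWeakSolution A p (fun x => (p / (p - 1)) ^ (p - 1) * V x) φ Ω G)
    (hGinf : TendstoZeroAtInfinityIn Ω Ω G)
    (hVG : (∫ x in Ω, V x * G x ^ (p - 1)) < 0)
    (hVGfin : (∫⁻ x in Ω, ENNReal.ofReal (|V x| * G x ^ (p - 1))) < ⊤) :
    ∀ ψ, IsTestFun Ω ψ →
      (∫ x in Ω, (((p - 1) / p) ^ p * (aNorm A x (gradient G x) / G x) ^ p +
          ((p - 1) / p) ^ (p - 1) * φ x * G x ^ (1 - p)) * |ψ x| ^ p)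
        ≤ ∫ x in Ω, ((aNorm A x (gradient ψ x)) ^ p + V x * |ψ x| ^ p) := by
  intro ψ hψ
  have hp0 : 0 < p := by linarith
  have hp1 : 0 < p - 1 := by linarith
  have hψ1 : ContDiff ℝ 1 ψ := hψ.1.of_le (by exact_mod_cast le_top)
  have hGg : ContinuousOn (gradient G) Ω :=
    (LinearIsometryEquiv.continuous _).comp_continuousOn
      (hG1.1.continuousOn_fderiv_of_isOpen hΩopen le_rfl)
  -- a non-integrable function has Bochner integral `0`, so the sign condition gives integrability
  have hVGint : IntegrableOn (fun x => V x * G x ^ (p - 1)) Ω := by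
    by_contra h
    rw [integral_undef h] at hVG
    exact lt_irrefl _ hVG
  set c := (p / (p - 1)) ^ (p - 1) with hc
  set γ := ((p - 1) / p) ^ (p - 1) with hγ
  have hγc : γ * c = 1 := by
    rw [hγ, hc, ← Real.mul_rpow (by positivity) (by positivity)]
    have : (p - 1) / p * (p / (p - 1)) = 1 := by field_simp
    rw [this, Real.one_rpow]
  let H : EuclideanSpace ℝ (Fin n) → EuclideanSpace ℝ (Fin n) := fun x =>
    aNorm A x (gradient G x) ^ (p - 2) • aVec A x (gradient G x)
  let b : EuclideanSpace ℝ (Fin n) → ℝ := fun x => c * V x * G x ^ (p - 1) - φ x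
  have hHint : ∀ K ⊆ Ω, IsCompact K → IntegrableOn H K := fun K hKΩ hK =>
    integrableOn_flux hΩopen hA hGg hp hKΩ hK
  have hcV : IntegrableOn (fun x => c * V x * G x ^ (p - 1)) Ω := by
    simpa only [mul_assoc, IntegrableOn] using hVGint.const_mul c
  have hφint : ∀ K, IsCompact K → IntegrableOn φ K := fun K hK =>
    hφ.1.continuous.continuousOn.integrableOn_compact hK
  have hbint : ∀ K ⊆ Ω, IsCompact K → IntegrableOn b K := fun K hKΩ hK =>
    (hcV.mono_set hKΩ).sub (hφint K hK)
  have hweak : ∀ ζ, IsTestFun Ω ζ →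
      ∫ x in Ω, (inner ℝ (H x) (gradient ζ x) + b x * ζ x) = 0 := by
    intro ζ hζ
    have hζ1 : ContDiff ℝ 1 ζ := hζ.1.of_le (by exact_mod_cast le_top)
    have hζ0 : ∀ x ∉ tsupport ζ, ζ x = 0 := fun x hx => image_eq_zero_of_notMem_tsupport hx
    have hK : IsCompact (tsupport ζ) := hζ.2.1
    have i1 : IntegrableOn (fun x => inner ℝ (H x) (gradient ζ x)) Ω :=
      integrableOn_inner_of_compact hΩopen hK (hHint _ hζ.2.2 hK)
        (continuous_gradient hζ1).continuousOn (continuous_gradient hζ1).aestronglyMeasurable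
        fun x hx => gradient_eq_zero_of_notMem hx
    have i2 : IntegrableOn (fun x => c * V x * G x ^ (p - 1) * ζ x) Ω :=
      integrableOn_mul_of_compact hΩopen hK (hcV.mono_set hζ.2.2) hζ1.continuous.continuousOn hζ0
    have i3 : IntegrableOn (fun x => φ x * ζ x) Ω :=
      integrableOn_mul_of_compact hΩopen hK (hφint _ hK) hζ1.continuous.continuousOn hζ0
    have h := hGsol ζ hζ
    have e1 : ∀ x, aNorm A x (gradient G x) ^ (p - 2) *
        aInner A x (gradient G x) (gradient ζ x) = inner ℝ (H x) (gradient ζ x) := by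
      intro x
      rw [aInner_eq_inner, real_inner_smul_left]
    simp only [e1] at h
    have e2 : ∀ x, inner ℝ (H x) (gradient ζ x) + b x * ζ x =
        inner ℝ (H x) (gradient ζ x) + c * V x * G x ^ (p - 1) * ζ x - φ x * ζ x := by
      intro x; simp only [b]; ring
    simp only [e2]
    have i12 : IntegrableOn (fun x => inner ℝ (H x) (gradient ζ x) +
        c * V x * G x ^ (p - 1) * ζ x) Ω := i1.add i2
    rw [integral_sub i12 i3, integral_add i1 i2, h, sub_self]
  set η : EuclideanSpace ℝ (Fin n) → ℝ := fun x => |ψ x| ^ p * G x ^ (1 - p) with hη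
  have hη1 : ContDiff ℝ 1 η := contDiff_picone hΩopen hp hG1.1 hGpos hψ
  have hηsupp : tsupport η ⊆ tsupport ψ := by
    refine closure_mono fun x hx => ?_
    contrapose! hx
    rw [Function.notMem_support] at hx ⊢
    rw [hη]
    simp [hx, Real.zero_rpow hp0.ne']
  have hηc : HasCompactSupport η :=
    hψ.2.1.isCompact.of_isClosed_subset (isClosed_tsupport _) hηsupp
  obtain ⟨hηint, hηeq⟩ := weak_eq_extends hΩopen hHint hbint hweak hη1 hηc (hηsupp.trans hψ.2.2)
  have hGG : ∀ x ∈ Ω, G x ^ (p - 1) * G x ^ (1 - p) = 1 := by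
    intro x hx
    rw [← Real.rpow_add (hGpos x hx)]
    simp
  have hVψ : IntegrableOn (fun x => V x * |ψ x| ^ p) Ω := by
    refine (integrableOn_mul_of_compact hΩopen hψ.2.1 (hVGint.mono_set hψ.2.2)
      hη1.continuous.continuousOn
      fun x hx => image_eq_zero_of_notMem_tsupport fun h => hx (hηsupp h)).congr_fun
      (fun x hx => ?_) hΩopen.measurableSet
    calc V x * G x ^ (p - 1) * (|ψ x| ^ p * G x ^ (1 - p))
        = V x * |ψ x| ^ p * (G x ^ (p - 1) * G x ^ (1 - p)) := by ring
      _ = V x * |ψ x| ^ p := by rw [hGG x hx, mul_one]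
  have hmψ : IntegrableOn (fun x => aNorm A x (gradient ψ x) ^ p) Ω := by
    refine IntegrableOn.of_forall_sdiff_eq_zero (s := tsupport ψ) ?_ hΩopen.measurableSet ?_
    · exact (((continuousOn_aNorm hΩopen hA (continuous_gradient hψ1).continuousOn).mono
        hψ.2.2).rpow_const fun x _ => Or.inr hp0.le).integrableOn_compact hψ.2.1
    · intro x hx
      rw [gradient_eq_zero_of_notMem hx.2]
      simp [aNorm, aInner, Real.zero_rpow hp0.ne']
  have hrhs : IntegrableOn (fun x => aNorm A x (gradient ψ x) ^ p + V x * |ψ x| ^ p) Ω :=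
    hmψ.add hVψ
  have hval : ∫ x in Ω, ((aNorm A x (gradient ψ x)) ^ p + V x * |ψ x| ^ p) =
      ∫ x in Ω, ((aNorm A x (gradient ψ x)) ^ p + V x * |ψ x| ^ p -
        γ * (inner ℝ (H x) (gradient η x) + b x * η x)) := by
    rw [integral_sub hrhs (hηint.const_mul γ), integral_const_mul, hηeq, mul_zero, sub_zero]
  rw [hval]
  refine integral_mono_of_nonneg ?_ (hrhs.sub (hηint.const_mul γ)) ?_
  · filter_upwards [ae_restrict_mem hΩopen.measurableSet] with x hx
    have h1 := hGpos x hx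
    have h2 := hφnonneg x
    have h3 : 0 ≤ aNorm A x (gradient G x) := Real.sqrt_nonneg _
    simp only [Pi.zero_apply]
    positivity
  · filter_upwards [ae_restrict_mem hΩopen.measurableSet] with x hx
    have hGx := hGpos x hx
    have hGd : DifferentiableAt ℝ G x :=
      (hG1.1.contDiffAt (hΩopen.mem_nhds hx)).differentiableAt one_ne_zero
    have hψd : DifferentiableAt ℝ ψ x := hψ1.differentiable one_ne_zero x
    have hpic := picone_pointwise (N := aNorm A x (gradient G x))
      (m := aNorm A x (gradient ψ x)) (s := ψ x) hp
      (Real.sqrt_nonneg _) (Real.sqrt_nonneg _) hGx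
      (abs_aInner_le hA hx (gradient G x) (gradient ψ x))
    have hin : inner ℝ (H x) (gradient η x) = aNorm A x (gradient G x) ^ (p - 2) *
        (p * |ψ x| ^ (p - 2) * ψ x * G x ^ (1 - p) *
          aInner A x (gradient G x) (gradient ψ x) -
          (p - 1) * |ψ x| ^ p * G x ^ (-p) * aNorm A x (gradient G x) ^ 2) := by
      rw [aNorm_sq hA hx, aInner_eq_inner, aInner_eq_inner, real_inner_smul_left,
        inner_gradient_right, inner_gradient_right, inner_gradient_right, hη,
        fderiv_picone hp hGd hψd hGx]
      simp
    have hbη : γ * (b x * η x) = V x * |ψ x| ^ p - γ * φ x * G x ^ (1 - p) * |ψ x| ^ p := by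
      calc γ * (b x * η x)
          = γ * c * (V x * |ψ x| ^ p) * (G x ^ (p - 1) * G x ^ (1 - p)) -
            γ * φ x * G x ^ (1 - p) * |ψ x| ^ p := by simp only [b, hη]; ring
        _ = _ := by rw [hγc, hGG x hx, one_mul, mul_one]
    rw [← hin] at hpic
    rw [mul_add, hbη, add_mul]
    linarith
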